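/- Let M ∈ ℂ^{p×p} be invertible, let A ∈ ℂ^{n×n×p} be *_M-pseudo-positive-definite, and let k ≥ 1 be an integer. Then there exists a unique *_M-pseudo-positive-definite tensor B ∈ ℂ^{n×n×p} such that the k-fold product B *_M B *_M ⋯ *_M B (k factors) equals A. -/

import Mathlib

open Matrix
open scoped ComplexOrder

attribute [local instance] Classical.propDecidable

noncomputable section

/-- Mode-3 product of a third-order complex tensor (stack of `p` frontal slices)
with a matrix `M ∈ ℂ^{q×p}`: `(A ×₃ M)ₖ = Σ_l M k l • A l`. -/
def mode3 {m n p q : ℕ} (M : Matrix (Fin q) (Fin p) ℂ)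
    (A : Fin p → Matrix (Fin m) (Fin n) ℂ) : Fin q → Matrix (Fin m) (Fin n) ℂ :=
  fun k => ∑ l, M k l • A l

/-- Face-wise product of two third-order tensors. -/
def facewise {m n s p : ℕ} (A : Fin p → Matrix (Fin m) (Fin n) ℂ)
    (B : Fin p → Matrix (Fin n) (Fin s) ℂ) : Fin p → Matrix (Fin m) (Fin s) ℂ :=
  fun i => A i * B i

/-- Tensor-tensor multiplication with an invertible `M ∈ ℂ^{p×p}`:
`A *_M B = ((A ×₃ M) △ (B ×₃ M)) ×₃ M⁻¹`. -/
def tmul3 {m n s p : ℕ} (M : Matrix (Fin p) (Fin p) ℂ)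
    (A : Fin p → Matrix (Fin m) (Fin n) ℂ) (B : Fin p → Matrix (Fin n) (Fin s) ℂ) :
    Fin p → Matrix (Fin m) (Fin s) ℂ :=
  mode3 M⁻¹ (facewise (mode3 M A) (mode3 M B))

/-- `A ∈ ℂ^{n×n×p}` is `*_M`-pseudo-positive-definite if every frontal slice of
`A ×₃ M` is (Hermitian) positive-definite. -/
def PseudoPD {n p : ℕ} (M : Matrix (Fin p) (Fin p) ℂ)
    (A : Fin p → Matrix (Fin n) (Fin n) ℂ) : Prop :=
  ∀ i, (mode3 M A i).PosDef

/-- The `*_M`-identity tensor: all frontal slices of `I ×₃ M` equal `I_n`. -/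
def tId {p : ℕ} (n : ℕ) (M : Matrix (Fin p) (Fin p) ℂ) :
    Fin p → Matrix (Fin n) (Fin n) ℂ :=
  mode3 M⁻¹ (fun _ => 1)

/-- The `*_M`-inverse of a tensor (the unique two-sided inverse when it exists). -/
def tinv {n p : ℕ} (M : Matrix (Fin p) (Fin p) ℂ)
    (A : Fin p → Matrix (Fin n) (Fin n) ℂ) : Fin p → Matrix (Fin n) (Fin n) ℂ :=
  if h : ∃ X, tmul3 M A X = tId n M ∧ tmul3 M X A = tId n M then h.choose else 0

/-- The `*_M`-pseudo-positive-definite square root of a tensor (the unique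
pseudo-positive-definite `B` with `B *_M B = A`, when it uniquely exists). -/
def tsqrt {n p : ℕ} (M : Matrix (Fin p) (Fin p) ℂ)
    (A : Fin p → Matrix (Fin n) (Fin n) ℂ) : Fin p → Matrix (Fin n) (Fin n) ℂ :=
  if h : ∃! B, PseudoPD M B ∧ tmul3 M B B = A then h.choose else 0

/-- The tensor geometric mean
`A #_M B = A^{1/2} *_M (A^{−1/2} *_M B *_M A^{−1/2})^{1/2} *_M A^{1/2}`,
where `A^{−1/2} = (A^{1/2})⁻¹`. -/
def geomean {n p : ℕ} (M : Matrix (Fin p) (Fin p) ℂ)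
    (A B : Fin p → Matrix (Fin n) (Fin n) ℂ) : Fin p → Matrix (Fin n) (Fin n) ℂ :=
  tmul3 M (tmul3 M (tsqrt M A)
    (tsqrt M (tmul3 M (tmul3 M (tinv M (tsqrt M A)) B) (tinv M (tsqrt M A)))))
    (tsqrt M A)

end

/-- `kfold M B k` is the `(k+1)`-fold product `B *_M B *_M ⋯ *_M B` (`k+1` factors). -/
noncomputable def kfold {n p : ℕ} (M : Matrix (Fin p) (Fin p) ℂ)
    (B : Fin p → Matrix (Fin n) (Fin n) ℂ) : ℕ → (Fin p → Matrix (Fin n) (Fin n) ℂ)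
  | 0 => B
  | k + 1 => tmul3 M (kfold M B k) B

/-!
`A ↦ A ×₃ M` is a bijection which turns `*_M` into the slicewise matrix product and
pseudo-positive-definiteness into slicewise positive definiteness. The claim is therefore that every
positive definite matrix has exactly one positive definite `k`-th root, applied in each slice. These
roots come from the continuous functional calculus: the real powers `a ↦ a ^ (1 / k)` and
`b ↦ b ^ k` are mutually inverse on nonnegative elements.
-/

theorem existsUnique_forall_apply {ι : Type*} {β : ι → Type*} {P : ∀ i, β i → Prop}
    (h : ∀ i, ∃! x, P i x) : ∃! f : ∀ i, β i, ∀ i, P i (f i) := by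
  choose f hf hf_unique using h
  exact ⟨f, hf, fun g hg => funext fun i => hf_unique i (g i) (hg i)⟩

section RootsOfPositiveElements

variable {R : Type*} [PartialOrder R] [Ring R] [StarRing R] [TopologicalSpace R]
  [StarOrderedRing R] [Algebra ℝ R] [ContinuousFunctionalCalculus ℝ R IsSelfAdjoint]
  [NonnegSpectrumClass ℝ R] [IsSemitopologicalRing R] [T2Space R] {a : R} {k : ℕ}

theorem existsUnique_nonneg_pow_eq (ha : 0 ≤ a) (hk : k ≠ 0) : ∃! b : R, 0 ≤ b ∧ b ^ k = a := by
  have hk_cast : (k : ℝ) ≠ 0 := Nat.cast_ne_zero.mpr hk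
  have hk_nonneg : (0 : ℝ) ≤ k := Nat.cast_nonneg k
  refine ⟨a ^ (k : ℝ)⁻¹, ⟨CFC.rpow_nonneg, ?_⟩, ?_⟩
  · rw [← CFC.rpow_natCast _ k CFC.rpow_nonneg,
      CFC.rpow_rpow_of_exponent_nonneg a _ _ (inv_nonneg.mpr hk_nonneg) hk_nonneg,
      inv_mul_cancel₀ hk_cast, CFC.rpow_one a]
  · rintro b ⟨hb, rfl⟩
    rw [← CFC.rpow_natCast b k,
      CFC.rpow_rpow_of_exponent_nonneg b _ _ hk_nonneg (inv_nonneg.mpr hk_nonneg),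
      mul_inv_cancel₀ hk_cast, CFC.rpow_one b]

theorem existsUnique_isStrictlyPositive_pow_eq (ha : IsStrictlyPositive a) (hk : k ≠ 0) :
    ∃! b : R, IsStrictlyPositive b ∧ b ^ k = a := by
  obtain ⟨b, ⟨hb, hba⟩, hb_unique⟩ := existsUnique_nonneg_pow_eq ha.nonneg hk
  have hb_unit : IsUnit b := (isUnit_pow_iff hk).mp (hba ▸ ha.isUnit)
  exact ⟨b, ⟨hb_unit.isStrictlyPositive hb, hba⟩, fun c hc => hb_unique c ⟨hc.1.nonneg, hc.2⟩⟩

end RootsOfPositiveElements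

open scoped MatrixOrder in
theorem existsUnique_posDef_pow_eq {𝕜 ι : Type*} [RCLike 𝕜] [Fintype ι] [DecidableEq ι]
    {S : Matrix ι ι 𝕜} (hS : S.PosDef) {k : ℕ} (hk : k ≠ 0) :
    ∃! T : Matrix ι ι 𝕜, T.PosDef ∧ T ^ k = S := by
  simpa only [isStrictlyPositive_iff_posDef] using
    existsUnique_isStrictlyPositive_pow_eq hS.isStrictlyPositive hk

section Mode3

variable {m n p q r s : ℕ}

theorem mode3_mode3 (N : Matrix (Fin r) (Fin q) ℂ) (M : Matrix (Fin q) (Fin p) ℂ)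
    (A : Fin p → Matrix (Fin m) (Fin n) ℂ) : mode3 N (mode3 M A) = mode3 (N * M) A := by
  funext k
  simp only [mode3, Matrix.mul_apply, Finset.smul_sum, Finset.sum_smul, smul_smul]
  exact Finset.sum_comm

theorem mode3_one (A : Fin p → Matrix (Fin m) (Fin n) ℂ) : mode3 1 A = A := by
  funext k
  simp only [mode3, Matrix.one_apply, ite_smul, one_smul, zero_smul, Finset.sum_ite_eq,
    Finset.mem_univ, if_true]

theorem leftInverse_mode3 {N : Matrix (Fin p) (Fin q) ℂ} {M : Matrix (Fin q) (Fin p) ℂ}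
    (h : N * M = 1) :
    Function.LeftInverse (mode3 (m := m) (n := n) N) (mode3 M) := fun A => by
  rw [mode3_mode3, h, mode3_one]

variable {M : Matrix (Fin p) (Fin p) ℂ}

theorem mode3_bijective (hM : IsUnit M.det) : Function.Bijective (mode3 (m := m) (n := n) M) :=
  ⟨(leftInverse_mode3 (nonsing_inv_mul M hM)).injective,
    (leftInverse_mode3 (mul_nonsing_inv M hM)).surjective⟩

theorem mode3_tmul3 (hM : IsUnit M.det) (A : Fin p → Matrix (Fin m) (Fin n) ℂ)
    (B : Fin p → Matrix (Fin n) (Fin s) ℂ) :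
    mode3 M (tmul3 M A B) = facewise (mode3 M A) (mode3 M B) :=
  leftInverse_mode3 (mul_nonsing_inv M hM) _

theorem mode3_kfold (hM : IsUnit M.det) (B : Fin p → Matrix (Fin n) (Fin n) ℂ) (k : ℕ) :
    mode3 M (kfold M B k) = mode3 M B ^ (k + 1) := by
  induction k with
  | zero => rw [kfold, zero_add, pow_one]
  | succ k ih =>
    rw [kfold, mode3_tmul3 hM, ih, pow_succ _ (k + 1)]
    rfl

theorem pseudoPD_and_kfold_eq_iff (hM : IsUnit M.det) {A B : Fin p → Matrix (Fin n) (Fin n) ℂ}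
    {k : ℕ} :
    PseudoPD M B ∧ kfold M B k = A ↔
      ∀ i, (mode3 M B i).PosDef ∧ mode3 M B i ^ (k + 1) = mode3 M A i := by
  rw [← (mode3_bijective hM).injective.eq_iff, mode3_kfold hM, funext_iff, PseudoPD, forall_and]
  simp only [Pi.pow_apply]

end Mode3

/-- for invertible `M ∈ ℂ^{p×p}`, a `*_M`-pseudo-positive-definite
`A ∈ ℂ^{n×n×p}` and an integer `k ≥ 1`, there exists a unique
`*_M`-pseudo-positive-definite `B` whose `k`-fold `*_M`-product equals `A`. -/
theorem pseudoPD_unique_kth_root {n p : ℕ} (M : Matrix (Fin p) (Fin p) ℂ)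
    (hM : IsUnit M.det) (A : Fin p → Matrix (Fin n) (Fin n) ℂ) (hA : PseudoPD M A)
    (k : ℕ) (hk : 1 ≤ k) :
    ∃! B : Fin p → Matrix (Fin n) (Fin n) ℂ,
      PseudoPD M B ∧ kfold M B (k - 1) = A := by
  obtain ⟨k, rfl⟩ := Nat.exists_eq_add_of_le' hk
  have slice_roots : ∃! T : Fin p → Matrix (Fin n) (Fin n) ℂ,
      ∀ i, (T i).PosDef ∧ T i ^ (k + 1) = mode3 M A i :=
    existsUnique_forall_apply fun i => existsUnique_posDef_pow_eq (hA i) k.succ_ne_zero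
  rw [(mode3_bijective hM).existsUnique_iff] at slice_roots
  simpa only [Nat.add_sub_cancel, pseudoPD_and_kfold_eq_iff hM] using slice_roots
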